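/- First inclusion in the proof of Proposition 3 (formal version): for every k ≥ 1, (J(f)·A)^{2k} ⊆ s^k·A + M, where J(f)·A denotes the ideal of A generated by ∂₁(f),…,∂ₙ(f). Equivalently, the image in H = A/M of the ideal generated by all products of 2k partial derivatives of f is contained in s^k·H. -/

import Mathlib

noncomputable section

open scoped Pointwise

/-- The formal partial derivative `∂ᵢ` with respect to the `i`th variable, determined by
`coeff α (∂ᵢ g) = (α i + 1) • coeff (α + eᵢ) g`. -/
def pd {σ : Type*} (i : σ) (g : MvPowerSeries σ ℂ) : MvPowerSeries σ ℂ :=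
  fun α => ((α i : ℂ) + 1) * MvPowerSeries.coeff (α + Finsupp.single i 1) g

lemma coeff_pd {σ : Type*} (i : σ) (g : MvPowerSeries σ ℂ) (α : σ →₀ ℕ) :
    MvPowerSeries.coeff α (pd i g) =
      ((α i : ℂ) + 1) * MvPowerSeries.coeff (α + Finsupp.single i 1) g := rfl

variable (n : ℕ)

/-- `R = ℂ[[x₁,…,xₙ]]`. -/
abbrev R' := MvPowerSeries (Fin n) ℂ

/-- `A = ℂ[[s,x₁,…,xₙ]]`, where `s` is the 0th variable and `xᵢ` is the variable
of index `i` (`1 ≤ i ≤ n`). -/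
abbrev A' := MvPowerSeries (Fin (n + 1)) ℂ

/-- The variable `s` of `A`. -/
def sv : A' n := MvPowerSeries.X 0

/-- Forget the `s`-exponent of a multi-index of `A`. -/
def tailF (β : Fin (n + 1) →₀ ℕ) : Fin n →₀ ℕ :=
  Finsupp.equivFunOnFinite.symm fun i => β i.succ

/-- The inclusion `R ⊆ A` as the subring of series not involving `s`. -/
def inclR (g : R' n) : A' n :=
  fun β => if β 0 = 0 then MvPowerSeries.coeff (tailF n β) g else 0

/-- The inclusion `ℂ[[s]] ⊆ A` as the subring of series in `s` alone. -/
def toA (p : PowerSeries ℂ) : A' n :=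
  fun β => if tailF n β = 0 then PowerSeries.coeff (β 0) p else 0

lemma coeff_inclR (g : R' n) (β : Fin (n + 1) →₀ ℕ) :
    MvPowerSeries.coeff β (inclR n g) =
      if β 0 = 0 then MvPowerSeries.coeff (tailF n β) g else 0 := rfl

/-- The `ℂ[[s]]`-linear operator `Fᵢ(g) = ∂ᵢ(f)·g − s·∂ᵢ(g)` on `A`. -/
def FF (f : R' n) (i : Fin n) (g : A' n) : A' n :=
  inclR n (pd i f) * g - sv n * pd i.succ g

/-- `M = range F₁ + ⋯ + range Fₙ`, so that `H = A/M` is the formal Brieskorn lattice. -/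
def Mset (f : R' n) : Set (A' n) :=
  {a | ∃ q : Fin n → A' n, a = ∑ i, FF n f i (q i)}

/-- The Jacobian ideal `J(f) = ⟨∂₁f,…,∂ₙf⟩` of `R`. -/
def Jf (f : R' n) : Ideal (R' n) :=
  Ideal.span (Set.range fun i : Fin n => pd i f)

/-- The maximal ideal `⟨x₁,…,xₙ⟩` of `R = ℂ[[x₁,…,xₙ]]`. -/
def mx : Ideal (R' n) :=
  Ideal.span (Set.range (MvPowerSeries.X : Fin n → R' n))

/-- The ideal `J(f)·A` of `A` generated by `∂₁(f),…,∂ₙ(f)`. -/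
def JA (f : R' n) : Ideal (A' n) :=
  Ideal.span (Set.range fun i : Fin n => inclR n (pd i f))

/-- The ideal `⟨x₁,…,xₙ⟩·A` of `A` generated by the variables `x₁,…,xₙ` (not `s`). -/
def XA : Ideal (A' n) :=
  Ideal.span (Set.range fun i : Fin n => (MvPowerSeries.X i.succ : A' n))

lemma pd_add {σ : Type*} (i : σ) (a b : MvPowerSeries σ ℂ) :
    pd i (a + b) = pd i a + pd i b := by
  ext α; simp [coeff_pd, mul_add]

lemma pd_smul {σ : Type*} (i : σ) (c : ℂ) (a : MvPowerSeries σ ℂ) :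
    pd i (c • a) = c • pd i a := by
  ext α; simp [coeff_pd]; ring

lemma FF_add (f : R' n) (i : Fin n) (a b : A' n) :
    FF n f i (a + b) = FF n f i a + FF n f i b := by
  simp only [FF, pd_add, mul_add]; ring

lemma FF_smul (f : R' n) (i : Fin n) (c : ℂ) (a : A' n) :
    FF n f i (c • a) = c • FF n f i a := by
  simp only [FF, pd_smul, Algebra.mul_smul_comm, smul_sub]

lemma FF_zero (f : R' n) (i : Fin n) : FF n f i 0 = 0 := by
  simpa using FF_smul n f i 0 0

/-- `M` as a `ℂ`-submodule of `A`. -/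
def Msub (f : R' n) : Submodule ℂ (A' n) where
  carrier := Mset n f
  zero_mem' := ⟨0, by simp [FF_zero]⟩
  add_mem' := by
    rintro a b ⟨q, rfl⟩ ⟨q', rfl⟩
    exact ⟨q + q', by simp [FF_add, Finset.sum_add_distrib]⟩
  smul_mem' := by
    rintro c a ⟨q, rfl⟩
    exact ⟨c • q, by simp [FF_smul, Finset.smul_sum]⟩

/-- The inclusion `R ⊆ A` as a `ℂ`-linear map. -/
def inclL : R' n →ₗ[ℂ] A' n where
  toFun := inclR n
  map_add' a b := by
    ext β; simp only [coeff_inclR, map_add]; split <;> simp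
  map_smul' c a := by
    ext β; simp only [coeff_inclR, map_smul, RingHom.id_apply]; split <;> simp

lemma pd_eq_pderiv {σ : Type*} (i : σ) (g : MvPowerSeries σ ℂ) :
    pd i g = MvPowerSeries.pderiv ℂ i g := by
  ext α
  rw [coeff_pd, MvPowerSeries.coeff_pderiv, mul_comm]

lemma pd_mul {σ : Type*} (i : σ) (a b : MvPowerSeries σ ℂ) :
    pd i (a * b) = a * pd i b + b * pd i a := by
  simp only [pd_eq_pderiv, Derivation.leibniz, smul_eq_mul]

lemma pd_sv_mul (i : Fin n) (g : A' n) :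
    pd i.succ (sv n * g) = sv n * pd i.succ g := by
  have h : pd i.succ (sv n) = 0 := by
    rw [pd_eq_pderiv, sv]
    exact MvPowerSeries.pderiv_X_of_ne (Fin.succ_ne_zero i).symm
  rw [pd_mul, h, mul_zero, add_zero]

/-- A partial derivative maps `I^(k+1)` into `I^k`. -/
lemma pd_mem_pow {σ : Type*} (i : σ) (I : Ideal (MvPowerSeries σ ℂ)) (k : ℕ) :
    ∀ a ∈ I ^ (k + 1), pd i a ∈ I ^ k := by
  induction k with
  | zero => intro a _; simp
  | succ k ih =>
    intro a ha
    rw [pow_succ] at ha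
    refine Submodule.mul_induction_on ha ?_ ?_
    · intro x hx y hy
      rw [pd_mul]
      refine Ideal.add_mem _ (Ideal.mul_mem_right _ _ hx) ?_
      rw [mul_comm, pow_succ]
      exact Ideal.mul_mem_mul (ih x hx) hy
    · intro x y hx hy
      rw [pd_add]
      exact Ideal.add_mem _ hx hy

lemma sv_mul_mem (f : R' n) (a : A' n) (ha : a ∈ Mset n f) : sv n * a ∈ Mset n f := by
  obtain ⟨q, rfl⟩ := ha
  refine ⟨fun i => sv n * q i, ?_⟩
  rw [Finset.mul_sum]
  refine Finset.sum_congr rfl fun i _ => ?_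
  simp only [FF, pd_sv_mul]
  ring

/-- Elements of `I * ⟨v₁,…,vₙ⟩` are combinations of the `vᵢ` with coefficients in `I`. -/
lemma exists_coeffs {S : Type*} [CommRing S] (I : Ideal S) (v : Fin n → S) (a : S)
    (ha : a ∈ I * Ideal.span (Set.range v)) :
    ∃ b : Fin n → S, (∀ i, b i ∈ I) ∧ a = ∑ i, v i * b i := by
  refine Submodule.mul_induction_on ha ?_ ?_
  · intro x hx y hy
    obtain ⟨c, rfl⟩ := (Ideal.mem_span_range_iff_exists_fun).1 hy
    refine ⟨fun i => x * c i, fun i => Ideal.mul_mem_right _ _ hx, ?_⟩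
    rw [Finset.mul_sum]
    exact Finset.sum_congr rfl fun i _ => by ring
  · rintro x y ⟨b, hb, rfl⟩ ⟨c, hc, rfl⟩
    refine ⟨fun i => b i + c i, fun i => Ideal.add_mem _ (hb i) (hc i), ?_⟩
    simp only [mul_add, Finset.sum_add_distrib]

lemma first_inclusion_aux (f : R' n) (k : ℕ) :
    ∀ a ∈ JA n f ^ (2 * k), ∃ u : A' n, ∃ w ∈ Mset n f, a = sv n ^ k * u + w := by
  induction k with
  | zero => intro a _; exact ⟨a, 0, (Msub n f).zero_mem, by simp⟩
  | succ k ih =>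
    intro a ha
    rw [show 2 * (k + 1) = (2 * k + 1) + 1 by ring, pow_succ] at ha
    obtain ⟨b, hb, rfl⟩ := exists_coeffs n _ _ a ha
    obtain ⟨u, w, hw, h⟩ := ih (∑ i, pd i.succ (b i))
      (Ideal.sum_mem _ fun i _ => pd_mem_pow _ _ _ _ (hb i))
    refine ⟨u, sv n * w + ∑ i, FF n f i (b i),
      (Msub n f).add_mem (sv_mul_mem n f w hw) ⟨b, rfl⟩, ?_⟩
    have e : ∑ i, FF n f i (b i) =
        ∑ i, inclR n (pd i f) * b i - sv n * ∑ i, pd i.succ (b i) := by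
      simp only [FF, Finset.sum_sub_distrib, Finset.mul_sum]
    rw [e, h]
    ring

/-- **First inclusion in the proof of Proposition 3 (formal version)**: for every
`k ≥ 1`, `(J(f)·A)^{2k} ⊆ s^k·A + M`. -/
theorem brieskorn_first_inclusion (n : ℕ) (hn : 1 ≤ n) (f : R' n)
    (hf0 : MvPowerSeries.constantCoeff f = 0)
    (m : ℕ) (hm : 1 ≤ m) (hiso : mx n ^ m ≤ Jf n f) :
    ∀ k : ℕ, 1 ≤ k →
      ((JA n f ^ (2 * k) : Ideal (A' n)) : Set (A' n)) ⊆
        ((Ideal.span {sv n ^ k} : Ideal (A' n)) : Set (A' n)) + Mset n f := by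
  intro k _ a ha
  obtain ⟨u, w, hw, rfl⟩ := first_inclusion_aux n f k a ha
  exact Set.add_mem_add (Ideal.mem_span_singleton.2 ⟨u, rfl⟩) hw
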